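/- Let Q be an n×n real matrix with entrywise nonnegative entries whose spectral radius satisfies ϑ(Q) < 1, let Λ be an entrywise nonnegative vector in ℝ^n, and let (x_t)_{t≥0} be a sequence of entrywise nonnegative vectors in ℝ^n satisfying x_t ≤ Λ + Q x_{t−1} entrywise for all t ≥ 1. Then I − Q is invertible and for every component j, limsup_{t→∞} (x_t)_j ≤ ((I − Q)^{−1} Λ)_j; consequently, for every entrywise nonnegative vector π ∈ ℝ^n, limsup_{t→∞} ⟨π, x_t⟩ ≤ πᵀ (I − Q)^{−1} Λ. -/

import Mathlib

open Filter Matrix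

open Topology in
theorem aux_pow_tendsto {A : Type*} [NormedRing A] [NormedAlgebra ℂ A] [CompleteSpace A]
    (a : A) (h : spectralRadius ℂ a < 1) : Tendsto (fun t : ℕ => a ^ t) atTop (𝓝 0) := by
  obtain ⟨q, hq1, hq2⟩ := ENNReal.lt_iff_exists_nnreal_btwn.mp h
  have hq3 : q < 1 := by exact_mod_cast hq2
  have hG := spectrum.pow_nnnorm_pow_one_div_tendsto_nhds_spectralRadius a
  have hev := hG.eventually (gt_mem_nhds hq1)
  rw [tendsto_zero_iff_norm_tendsto_zero]
  refine squeeze_zero' (Eventually.of_forall fun _ => norm_nonneg _) ?_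
    (tendsto_pow_atTop_nhds_zero_of_lt_one q.2 hq3)
  filter_upwards [hev, eventually_gt_atTop 0] with t ht h0
  have h0' : (0 : ℝ) < t := by exact_mod_cast h0
  have h1 : ((‖a ^ t‖₊ : ENNReal)) ≤ (q : ENNReal) ^ t := by
    have := ENNReal.rpow_le_rpow ht.le h0'.le
    rw [← ENNReal.rpow_mul, one_div, inv_mul_cancel₀ h0'.ne', ENNReal.rpow_one,
      ENNReal.rpow_natCast] at this
    exact this
  exact_mod_cast h1

attribute [local instance] Matrix.linftyOpNormedRing Matrix.linftyOpNormedAlgebra in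
open Topology in
theorem aux_entry {n : ℕ} (Q : Matrix (Fin n) (Fin n) ℝ)
    (hQ : spectralRadius ℂ (Q.map Complex.ofReal) < 1) (i j : Fin n) :
    Tendsto (fun t : ℕ => (Q ^ t) i j) atTop (𝓝 0) := by
  have h := aux_pow_tendsto (A := Matrix (Fin n) (Fin n) ℂ) (Q.map Complex.ofReal) hQ
  have h2 : Tendsto (fun t : ℕ => ((Q.map Complex.ofReal) ^ t) i j) atTop (𝓝 0) :=
    ((continuous_apply_apply i j).tendsto (0 : Matrix (Fin n) (Fin n) ℂ)).comp h
  have h3 : ∀ t : ℕ, (Q.map Complex.ofReal) ^ t = (Q ^ t).map Complex.ofReal := fun t =>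
    (Matrix.map_pow Q Complex.ofRealHom t).symm
  have h4 := (Complex.continuous_re.tendsto 0).comp h2
  simpa [Function.comp_def, h3] using h4

open Topology in
theorem aux_mulVec {n : ℕ} (Q : Matrix (Fin n) (Fin n) ℝ)
    (hQ : spectralRadius ℂ (Q.map Complex.ofReal) < 1) (v : Fin n → ℝ) :
    Tendsto (fun t : ℕ => (Q ^ t) *ᵥ v) atTop (𝓝 0) := by
  rw [tendsto_pi_nhds]
  intro i
  have : Tendsto (fun t : ℕ => ∑ j, (Q ^ t) i j * v j) atTop (𝓝 (∑ j, 0 * v j)) :=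
    tendsto_finsetSum _ fun j _ => (aux_entry Q hQ i j).mul_const _
  simpa [Matrix.mulVec, dotProduct] using this

/-- Abstract core of Theorem 1 of the paper: if `Q` is an entrywise nonnegative real
matrix with spectral radius `< 1`, `Λ` is entrywise nonnegative, and the entrywise
nonnegative vectors `x_t` satisfy the entrywise recursion `x_t ≤ Λ + Q x_{t-1}`, then
`I - Q` is invertible, `limsup_t (x_t)_j ≤ ((I - Q)⁻¹ Λ)_j` for every component `j`, and
for every entrywise nonnegative `π`, `limsup_t ⟨π, x_t⟩ ≤ πᵀ (I - Q)⁻¹ Λ`. -/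
theorem asymptotic_stability_bound {n : ℕ}
    (Q : Matrix (Fin n) (Fin n) ℝ) (hQnonneg : ∀ i j, 0 ≤ Q i j)
    (hQ : spectralRadius ℂ (Q.map Complex.ofReal) < 1)
    (Λ : Fin n → ℝ) (hΛ : ∀ j, 0 ≤ Λ j)
    (x : ℕ → Fin n → ℝ) (hx : ∀ t j, 0 ≤ x t j)
    (hrec : ∀ t : ℕ, 1 ≤ t → ∀ j, x t j ≤ (Λ + Q.mulVec (x (t - 1))) j) :
    IsUnit (1 - Q) ∧
      (∀ j, limsup (fun t : ℕ => x t j) atTop ≤ (1 - Q)⁻¹.mulVec Λ j) ∧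
      (∀ π : Fin n → ℝ, (∀ j, 0 ≤ π j) →
        limsup (fun t : ℕ => π ⬝ᵥ x t) atTop ≤ π ⬝ᵥ (1 - Q)⁻¹.mulVec Λ) := by
  have hU : IsUnit (1 - Q) := by
    rw [← Matrix.mulVec_injective_iff_isUnit]
    refine (injective_iff_map_eq_zero (1 - Q).mulVecLin).mpr ?_
    intro v hv
    have hv' : Q *ᵥ v = v := by
      have : (1 - Q) *ᵥ v = 0 := hv
      rw [Matrix.sub_mulVec, Matrix.one_mulVec, sub_eq_zero] at this
      exact this.symm
    have hp : ∀ t : ℕ, (Q ^ t) *ᵥ v = v := by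
      intro t
      induction t with
      | zero => simp
      | succ t ih => rw [pow_succ, ← Matrix.mulVec_mulVec, hv', ih]
    have := aux_mulVec Q hQ v
    simp only [hp] at this
    exact tendsto_nhds_unique tendsto_const_nhds this
  set s := (1 - Q)⁻¹ *ᵥ Λ with hs
  have hs1 : Λ + Q *ᵥ s = s := by
    have : (1 - Q) *ᵥ s = Λ := by
      rw [hs, Matrix.mulVec_mulVec,
        Matrix.mul_nonsing_inv _ ((Matrix.isUnit_iff_isUnit_det _).mp hU), Matrix.one_mulVec]
    rw [Matrix.sub_mulVec, Matrix.one_mulVec] at this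
    rw [← this]; abel
  clear_value s
  have hb : ∀ t, x t ≤ s + (Q ^ t) *ᵥ (x 0 - s) := by
    intro t
    induction t with
    | zero => simp
    | succ t ih =>
      have h1 : x (t + 1) ≤ Λ + Q *ᵥ (x t) := fun j => hrec (t + 1) (by omega) j
      have h2 : Q *ᵥ (x t) ≤ Q *ᵥ (s + (Q ^ t) *ᵥ (x 0 - s)) := by
        intro i
        show ∑ j, Q i j * x t j ≤ ∑ j, Q i j * (s + (Q ^ t) *ᵥ (x 0 - s)) j
        exact Finset.sum_le_sum fun j _ => mul_le_mul_of_nonneg_left (ih j) (hQnonneg i j)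
      rw [Matrix.mulVec_add, Matrix.mulVec_mulVec, ← pow_succ'] at h2
      calc x (t + 1) ≤ Λ + Q *ᵥ (x t) := h1
        _ ≤ Λ + (Q *ᵥ s + (Q ^ (t + 1)) *ᵥ (x 0 - s)) := by gcongr
        _ = _ := by rw [← add_assoc, hs1]
  have hlim : Tendsto (fun t : ℕ => s + (Q ^ t) *ᵥ (x 0 - s)) atTop (nhds s) := by
    simpa using (aux_mulVec Q hQ (x 0 - s)).const_add s
  have hmain : ∀ π : Fin n → ℝ, (∀ j, 0 ≤ π j) →
        limsup (fun t : ℕ => π ⬝ᵥ x t) atTop ≤ π ⬝ᵥ s := by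
    intro π hπ
    have hl : Tendsto (fun t : ℕ => π ⬝ᵥ (s + (Q ^ t) *ᵥ (x 0 - s))) atTop (nhds (π ⬝ᵥ s)) := by
      have hc : Continuous fun v : Fin n → ℝ => π ⬝ᵥ v := by
        unfold dotProduct; fun_prop
      exact (hc.tendsto s).comp hlim
    rw [← hl.limsup_eq]
    refine limsup_le_limsup (Eventually.of_forall fun t =>
      Finset.sum_le_sum fun j _ => mul_le_mul_of_nonneg_left (hb t j) (hπ j)) ?_
      hl.isBoundedUnder_le
    refine IsBoundedUnder.isCoboundedUnder_le ⟨0, ?_⟩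
    exact eventually_map.mpr (Eventually.of_forall fun t =>
      Finset.sum_nonneg fun j _ => mul_nonneg (hπ j) (hx t j))
  refine ⟨hU, fun j => ?_, hmain⟩
  have := hmain (Pi.single j 1) (fun k => by
    by_cases h : k = j
    · subst h; simp
    · simp [h])
  simpa using this
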